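/- Let C be a category with finite products and X a projection-coextensive object of C. Let p : X → A be a product projection, and let q : X → B and q' : X → B' both be complements of p (i.e., both (p, q) and (p, q') are binary product diagrams). Then there exists an isomorphism β : B → B' such that β∘q = q'. -/

import Mathlib

open CategoryTheory CategoryTheory.Limits

universe v u

variable {C : Type u} [Category.{v} C]

/-- `(p, q)` is a binary product diagram, exhibiting `X` as the product of `A` and `B`. -/
def IsBinaryProduct {X A B : C} (p : X ⟶ A) (q : X ⟶ B) : Prop :=
  Nonempty (IsLimit (BinaryFan.mk p q))

/-- `p : X ⟶ A` is a product projection. -/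
def IsProductProjection {X A : C} (p : X ⟶ A) : Prop :=
  ∃ (B : C) (q : X ⟶ B), IsBinaryProduct p q

/-- A pushout square whose two legs belong to the class `M`. -/
def IsMPushout (M : MorphismProperty C) {Z A B P : C}
    (f : Z ⟶ A) (g : Z ⟶ B) (a : A ⟶ P) (b : B ⟶ P) : Prop :=
  IsPushout f g a b ∧ M a ∧ M b

/-- `X` is an `M`-coextensive object. -/
structure MCoextensive (M : MorphismProperty C) (X : C) : Prop where
  pushout_exists : ∀ ⦃Y A : C⦄ (m : X ⟶ Y) (p : X ⟶ A), M m → IsProductProjection p →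
    ∃ (P : C) (a : A ⟶ P) (b : Y ⟶ P), IsMPushout M p m a b
  isBinaryProduct_iff : ∀ ⦃A₁ A₂ Y B₁ B₂ : C⦄ (π₁ : X ⟶ A₁) (π₂ : X ⟶ A₂)
    (f : X ⟶ Y) (p₁ : A₁ ⟶ B₁) (p₂ : A₂ ⟶ B₂) (π₁' : Y ⟶ B₁) (π₂' : Y ⟶ B₂),
    IsBinaryProduct π₁ π₂ → M f → M p₁ → M p₂ →
    π₁ ≫ p₁ = f ≫ π₁' → π₂ ≫ p₂ = f ≫ π₂' →
    (IsBinaryProduct π₁' π₂' ↔ (IsMPushout M π₁ f p₁ π₁' ∧ IsMPushout M π₂ f p₂ π₂'))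

/-- The class of product projections. -/
def projections (C : Type u) [Category.{v} C] : MorphismProperty C :=
  fun _ _ f => IsProductProjection f

/-- `X` is projection-coextensive. -/
def ProjectionCoextensive (X : C) : Prop := MCoextensive (projections C) X

/-- `f` is a regular epimorphism (a coequalizer of some parallel pair). -/
def IsRegularEpimorphism {X Y : C} (f : X ⟶ Y) : Prop :=
  ∃ (W : C) (a b : W ⟶ X) (h : a ≫ f = b ≫ f), Nonempty (IsColimit (Cofork.ofπ f h))

/-- The class of regular epimorphisms. -/
def regularEpis (C : Type u) [Category.{v} C] : MorphismProperty C :=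
  fun _ _ f => IsRegularEpimorphism f

/-- `X` is regularly-coextensive. -/
def RegularlyCoextensive (X : C) : Prop := MCoextensive (regularEpis C) X

/-- A regular category: finitely complete, coequalizers of kernel pairs, and
regular epimorphisms are stable under pullback. -/
class IsRegularCategory (C : Type u) [Category.{v} C] [HasFiniteLimits C] : Prop where
  hasCoequalizer_kernelPair : ∀ {X Y : C} (f : X ⟶ Y),
    HasCoequalizer (pullback.fst f f) (pullback.snd f f)
  regularEpi_stable : ∀ {X Y Z : C} (f : X ⟶ Y) (g : Z ⟶ Y),
    IsRegularEpimorphism f → IsRegularEpimorphism (pullback.snd f g)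

/-- `X` has global support: the unique morphism to the terminal object is a regular epi. -/
def HasGlobalSupport [HasTerminal C] (X : C) : Prop :=
  IsRegularEpimorphism (terminal.from X)

/-!
Given two binary product diagrams `(p, q)` and `(p, q')` on `X`, let `P` be the pushout of `q` and
`q'`. The terminal object is, by coextensivity, the pushout of `p` and `q'`. Pushing the diagram
`(p, q)` out along `q'` therefore exhibits `B'` as the product `1 × P`, so that `B' ⟶ P` is an
isomorphism. By symmetry so is `B ⟶ P`.
-/

section IsBinaryProduct

variable {X A B : C} {p : X ⟶ A} {q : X ⟶ B}

theorem IsBinaryProduct.symm (h : IsBinaryProduct p q) : IsBinaryProduct q p :=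
  h.map BinaryFan.isLimitFlip

theorem IsBinaryProduct.isProductProjection_left (h : IsBinaryProduct p q) :
    IsProductProjection p :=
  ⟨B, q, h⟩

theorem IsBinaryProduct.isProductProjection_right (h : IsBinaryProduct p q) :
    IsProductProjection q :=
  h.symm.isProductProjection_left

end IsBinaryProduct

section Terminal

variable [HasTerminal C] {A B : C}

theorem isBinaryProduct_terminalFrom_iff_isIso {f : A ⟶ B} :
    IsBinaryProduct (terminal.from A) f ↔ IsIso f :=
  BinaryFan.isLimit_iff_isIso_snd terminalIsTerminal (BinaryFan.mk (terminal.from A) f)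

theorem isBinaryProduct_terminalFrom_id (A : C) : IsBinaryProduct (terminal.from A) (𝟙 A) :=
  isBinaryProduct_terminalFrom_iff_isIso.mpr inferInstance

theorem isProductProjection_id (A : C) : IsProductProjection (𝟙 A) :=
  (isBinaryProduct_terminalFrom_id A).isProductProjection_right

theorem isProductProjection_terminalFrom (A : C) : IsProductProjection (terminal.from A) :=
  (isBinaryProduct_terminalFrom_id A).isProductProjection_left

end Terminal

theorem IsMPushout.flip {M : MorphismProperty C} {Z A B P : C} {f : Z ⟶ A} {g : Z ⟶ B}
    {a : A ⟶ P} {b : B ⟶ P} (h : IsMPushout M f g a b) : IsMPushout M g f b a :=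
  ⟨h.1.flip, h.2.2, h.2.1⟩

namespace MCoextensive

variable [HasTerminal C] {M : MorphismProperty C} {X A B B' : C}
  {p : X ⟶ A} {q : X ⟶ B} {q' : X ⟶ B'}

theorem isMPushout_terminalFrom (hX : MCoextensive M X) (hM : projections C ≤ M)
    (hq : IsBinaryProduct p q) :
    IsMPushout M p q (terminal.from A) (terminal.from B) := by
  -- Compare `X = A × B` with `A = A × 1` along `p`: the right-hand square is the one wanted.
  have hA : IsBinaryProduct (𝟙 A) (terminal.from A) := (isBinaryProduct_terminalFrom_id A).symm
  have squares := (hX.isBinaryProduct_iff p q p (𝟙 A) (terminal.from B) (𝟙 A) (terminal.from A) hq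
    (hM _ hq.isProductProjection_left) (hM _ (isProductProjection_id A))
    (hM _ (isProductProjection_terminalFrom B)) rfl (Subsingleton.elim _ _)).mp hA
  exact squares.2.flip

theorem isIso_of_isMPushout (hX : MCoextensive M X) (hM : projections C ≤ M)
    (hq : IsBinaryProduct p q) (hq' : IsBinaryProduct p q') {P : C} {a : B ⟶ P} {b : B' ⟶ P}
    (h : IsMPushout M q q' a b) : IsIso b := by
  have hb : IsBinaryProduct (terminal.from B') b :=
    (hX.isBinaryProduct_iff p q q' (terminal.from A) a (terminal.from B') b hq
      (hM _ hq'.isProductProjection_right) (hM _ (isProductProjection_terminalFrom A)) h.2.1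
      (Subsingleton.elim _ _) h.1.w).mpr ⟨hX.isMPushout_terminalFrom hM hq', h⟩
  exact isBinaryProduct_terminalFrom_iff_isIso.mp hb

end MCoextensive

theorem projectionCoextensive_complements_unique_general [HasTerminal C]
    {M : MorphismProperty C} (hM : projections C ≤ M) {X : C} (hX : MCoextensive M X)
    {A B B' : C} {p : X ⟶ A} {q : X ⟶ B} {q' : X ⟶ B'}
    (hq : IsBinaryProduct p q) (hq' : IsBinaryProduct p q') :
    ∃ β : B ≅ B', q ≫ β.hom = q' := by
  obtain ⟨P, a, b, h⟩ :=
    hX.pushout_exists q' q (hM _ hq'.isProductProjection_right) hq.isProductProjection_right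
  have : IsIso b := hX.isIso_of_isMPushout hM hq hq' h
  have : IsIso a := hX.isIso_of_isMPushout hM hq' hq h.flip
  refine ⟨asIso a ≪≫ (asIso b).symm, ?_⟩
  calc q ≫ a ≫ inv b = q' ≫ b ≫ inv b := h.1.w_assoc (inv b)
    _ = q' := by rw [IsIso.hom_inv_id, Category.comp_id]

/-- Complements of a product projection of a projection-coextensive object are
unique up to a compatible isomorphism. -/
theorem projectionCoextensive_complements_unique
    {C : Type u} [Category.{v} C] [HasFiniteProducts C]
    (X : C) (hX : ProjectionCoextensive X)
    {A B B' : C} (p : X ⟶ A) (q : X ⟶ B) (q' : X ⟶ B')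
    (hq : IsBinaryProduct p q) (hq' : IsBinaryProduct p q') :
    ∃ β : B ≅ B', q ≫ β.hom = q' :=
  projectionCoextensive_complements_unique_general le_rfl hX hq hq'
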